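/- arXiv:2510.21669 — 5 statements merged into one kernel-verified Lean document; each statement's English description precedes it below -/
import Mathlib

section
/- Exact evaluation of the Laplace-type integral (core computation of Proposition 1): Let M > 0, ξ ≥ 0, γ > 0 and c ∈ (0,1), and set u_± = √M (√(1±c) − γ√ξ). Then (1/(2c)) ∫_{1−c}^{1+c} exp( −M( x + ξ − 2γ√(ξ x) ) ) dx = ( e^{M ξ (γ² − 1)} / (c M) ) · [ (1/2)( e^{−u_−²} − e^{−u_+²} ) + (γ/2) √(π ξ M) ( erf(u_+) − erf(u_−) ) ], where erf(t) = (2/√π) ∫₀^t e^{−s²} ds. -/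
open Real

/-- The Gauss error function `erf(t) = (2/√π) ∫₀ᵗ e^{−s²} ds`. -/
noncomputable def erf (t : ℝ) : ℝ :=
  (2 / Real.sqrt Real.pi) * ∫ s in (0 : ℝ)..t, Real.exp (-(s ^ 2))

theorem erf_hasDerivAt (t : ℝ) :
    HasDerivAt erf ((2 / Real.sqrt Real.pi) * Real.exp (-(t ^ 2))) t := by
  have hcont : Continuous (fun s : ℝ => Real.exp (-(s ^ 2))) := by fun_prop
  have h := (intervalIntegral.integral_hasDerivAt_right (hcont.intervalIntegrable 0 t)
    (hcont.stronglyMeasurableAtFilter _ _) hcont.continuousAt).const_mul (2 / Real.sqrt Real.pi)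
  exact h

/-- Exact evaluation of the Laplace-type integral (core computation of Proposition 1):
for `M > 0`, `ξ ≥ 0`, `γ > 0` and `c ∈ (0,1)`, with `u_± = √M(√(1±c) − γ√ξ)`,
`(1/(2c)) ∫_{1−c}^{1+c} e^{−M(x+ξ−2γ√(ξx))} dx
  = (e^{Mξ(γ²−1)}/(cM)) ((1/2)(e^{−u_−²} − e^{−u_+²}) + (γ/2)√(πξM)(erf u_+ − erf u_−))`. -/
theorem laplace_integral_eval (M ξ γ c : ℝ) (hM : 0 < M) (hξ : 0 ≤ ξ) (hγ : 0 < γ)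
    (hc : c ∈ Set.Ioo (0 : ℝ) 1) :
    (1 / (2 * c)) * (∫ x in (1 - c)..(1 + c), Real.exp (-(M * (x + ξ - 2 * γ * Real.sqrt (ξ * x)))))
      = (Real.exp (M * ξ * (γ ^ 2 - 1)) / (c * M)) *
          ((1 / 2) * (Real.exp (-(Real.sqrt M * (Real.sqrt (1 - c) - γ * Real.sqrt ξ)) ^ 2)
              - Real.exp (-(Real.sqrt M * (Real.sqrt (1 + c) - γ * Real.sqrt ξ)) ^ 2))
            + (γ / 2) * Real.sqrt (Real.pi * ξ * M) *
              (erf (Real.sqrt M * (Real.sqrt (1 + c) - γ * Real.sqrt ξ))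
                - erf (Real.sqrt M * (Real.sqrt (1 - c) - γ * Real.sqrt ξ)))) := by
  obtain ⟨hc0, hc1⟩ := hc
  have hcne : c ≠ 0 := hc0.ne'
  have hMne : M ≠ 0 := hM.ne'
  have hsp : Real.sqrt Real.pi ≠ 0 := (Real.sqrt_pos.mpr Real.pi_pos).ne'
  have hsM : Real.sqrt M ^ 2 = M := Real.sq_sqrt hM.le
  have hsξ : Real.sqrt ξ ^ 2 = ξ := Real.sq_sqrt hξ
  have hs3 : Real.sqrt (Real.pi * ξ * M) = Real.sqrt Real.pi * Real.sqrt ξ * Real.sqrt M := by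
    rw [Real.sqrt_mul (by positivity), Real.sqrt_mul Real.pi_pos.le]
  have key : ∀ x ∈ Set.uIcc (1 - c) (1 + c),
      HasDerivAt (fun x : ℝ => (2 / M) * Real.exp (M * ξ * (γ ^ 2 - 1)) *
        (-(1 / 2) * Real.exp (-(Real.sqrt M * (Real.sqrt x - γ * Real.sqrt ξ)) ^ 2)
          + (γ / 2) * Real.sqrt (Real.pi * ξ * M) *
            erf (Real.sqrt M * (Real.sqrt x - γ * Real.sqrt ξ))))
        (Real.exp (-(M * (x + ξ - 2 * γ * Real.sqrt (ξ * x))))) x := by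
    intro x hx
    rw [Set.uIcc_of_le (by linarith)] at hx
    have hx0 : 0 < x := by linarith [hx.1]
    have hsx : Real.sqrt x ≠ 0 := (Real.sqrt_pos.mpr hx0).ne'
    have hsx2 : Real.sqrt x ^ 2 = x := Real.sq_sqrt hx0.le
    have hu : HasDerivAt (fun x : ℝ => Real.sqrt M * (Real.sqrt x - γ * Real.sqrt ξ))
        (Real.sqrt M * (1 / (2 * Real.sqrt x))) x :=
      ((Real.hasDerivAt_sqrt hx0.ne').sub_const _).const_mul _
    have h1 := ((hu.pow 2).neg).exp
    have h2 := (erf_hasDerivAt (Real.sqrt M * (Real.sqrt x - γ * Real.sqrt ξ))).comp x hu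
    have h3 := ((h1.const_mul (-(1 / 2))).add
      (h2.const_mul ((γ / 2) * Real.sqrt (Real.pi * ξ * M)))).const_mul
        ((2 / M) * Real.exp (M * ξ * (γ ^ 2 - 1)))
    refine h3.congr_deriv ?_
    have he : Real.exp (-(M * (x + ξ - 2 * γ * Real.sqrt (ξ * x))))
        = Real.exp (M * ξ * (γ ^ 2 - 1)) *
          Real.exp (-(Real.sqrt M * (Real.sqrt x - γ * Real.sqrt ξ)) ^ 2) := by
      rw [← Real.exp_add, Real.sqrt_mul hξ]
      congr 1
      rw [mul_pow, hsM, sub_sq, mul_pow, hsx2, hsξ]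
      ring
    rw [he, hs3]
    simp only [Pi.pow_apply, Pi.neg_apply]
    generalize Real.exp (-(Real.sqrt M * (Real.sqrt x - γ * Real.sqrt ξ)) ^ 2) = A
    generalize Real.exp (M * ξ * (γ ^ 2 - 1)) = B
    field_simp
    norm_num
    linear_combination (2 * B * A * Real.sqrt x) * hsM
  rw [intervalIntegral.integral_eq_sub_of_hasDerivAt key
    (by apply Continuous.intervalIntegrable; fun_prop)]
  field_simp
  ring
end

section
/- Asymptotics of the integral when ξ = 1 (appendix discussion of Example 1): Fix c ∈ (0,1) and let γ_c = (1/(3c))((1+c)^{3/2} − (1−c)^{3/2}) ∈ (0,1). Define J(M) = (1/(2c)) ∫_{1−c}^{1+c} exp( −M( x + 1 − 2γ_c √x ) ) dx for M > 0. Then lim_{M→∞} J(M) · (c/γ_c) · √(M/π) · e^{M(1−γ_c²)} = 1; equivalently, J(M) = (1+o(1)) (γ_c/c) √(π/M) e^{−M(1−γ_c²)} as M → ∞. -/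
open Real Filter

/-- `γ_c = (1/(3c))((1+c)^{3/2} − (1−c)^{3/2})`, the mean of `√Y` for `Y ~ Uni(1−c,1+c)`. -/
noncomputable def gammaC (c : ℝ) : ℝ :=
  (1 / (3 * c)) * ((1 + c) ^ ((3 : ℝ) / 2) - (1 - c) ^ ((3 : ℝ) / 2))

/-- The Laplace-type integral `J(M) = (1/(2c)) ∫_{1−c}^{1+c} e^{−M(x+1−2γ_c√x)} dx`. -/
noncomputable def Jint (c M : ℝ) : ℝ :=
  (1 / (2 * c)) * ∫ x in (1 - c)..(1 + c), Real.exp (-(M * (x + 1 - 2 * gammaC c * Real.sqrt x)))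


theorem gammaC_bounds (c : ℝ) (hc : c ∈ Set.Ioo (0 : ℝ) 1) :
    √(1 - c) < gammaC c ∧ gammaC c < √(1 + c) := by
  obtain ⟨h0, h1⟩ := hc
  have key : ∀ x : ℝ, 0 ≤ x → x ^ ((3 : ℝ) / 2) = √x ^ 3 := by
    intro x hx
    rw [Real.sqrt_eq_rpow, ← Real.rpow_natCast, ← Real.rpow_mul hx]
    norm_num
  unfold gammaC
  rw [key _ (by linarith), key _ (by linarith)]
  have ha : 0 < √(1 - c) := Real.sqrt_pos.2 (by linarith)
  have hab : √(1 - c) < √(1 + c) := Real.sqrt_lt_sqrt (by linarith) (by linarith)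
  have ha2 : √(1 - c) ^ 2 = 1 - c := Real.sq_sqrt (by linarith)
  have hb2 : √(1 + c) ^ 2 = 1 + c := Real.sq_sqrt (by linarith)
  generalize √(1 - c) = a at *
  generalize √(1 + c) = b at *
  have hcc : c = (b ^ 2 - a ^ 2) / 2 := by linarith
  have hd : 0 < b - a := by linarith
  have hs : 0 < a + b := by linarith
  have : 1 / (3 * c) * (b ^ 3 - a ^ 3) = 2 * (a ^ 2 + a * b + b ^ 2) / (3 * (a + b)) := by
    have h0' := h0.ne'
    field_simp
    rw [hcc]; ring
  rw [this, lt_div_iff₀ (by positivity), div_lt_iff₀ (by positivity)]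
  constructor <;> nlinarith [mul_pos hd hs, mul_pos hd ha]

theorem Jint_subst (c M : ℝ) (hc : c ∈ Set.Ioo (0 : ℝ) 1) (hM : 0 < M) :
    Jint c M * (c / gammaC c) * Real.sqrt (M / Real.pi) * Real.exp (M * (1 - gammaC c ^ 2)) =
    (√π)⁻¹ * (∫ t in (√M * (√(1 - c) - gammaC c))..(√M * (√(1 + c) - gammaC c)), rexp (-1 * t ^ 2))
    + (√π)⁻¹ * (gammaC c)⁻¹ * ((√M)⁻¹ *
      (∫ t in (√M * (√(1 - c) - gammaC c))..(√M * (√(1 + c) - gammaC c)),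
        t * rexp (-1 * t ^ 2))) := by
  obtain ⟨hA, hB⟩ := gammaC_bounds c hc
  obtain ⟨h0, h1⟩ := hc
  unfold Jint
  have ha : 0 < √(1 - c) := Real.sqrt_pos.2 (by linarith)
  have ha2 : √(1 - c) ^ 2 = 1 - c := Real.sq_sqrt (by linarith)
  have hb2 : √(1 + c) ^ 2 = 1 + c := Real.sq_sqrt (by linarith)
  have hs : 0 < √M := Real.sqrt_pos.2 hM
  have hs2 : √M ^ 2 = M := Real.sq_sqrt hM.le
  rw [Real.sqrt_div hM.le]
  have hpi : 0 < √π := Real.sqrt_pos.2 Real.pi_pos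
  generalize √π = p at *
  generalize gammaC c = g at *
  have hg : 0 < g := by linarith
  generalize √M = s at *
  have hsub := intervalIntegral.integral_comp_mul_deriv (a := s * (√(1 - c) - g))
    (b := s * (√(1 + c) - g))
    (f := fun t => (g + t / s) ^ 2) (f' := fun t => 2 * (g + t / s) / s)
    (g := fun x => rexp (-(M * (x + 1 - 2 * g * √x))))
    (fun x _ => by
      have := (((hasDerivAt_id x).div_const s).const_add g).pow 2
      refine this.congr_deriv ?_
      simp; ring) (by fun_prop) (by fun_prop)
  have e1 : ∀ y, (g + s * (y - g) / s) ^ 2 = y ^ 2 := by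
    intro y; field_simp; ring
  simp only [e1, ha2, hb2] at hsub
  rw [← hsub]
  have hle : s * (√(1 - c) - g) ≤ s * (√(1 + c) - g) := by
    apply mul_le_mul_of_nonneg_left _ hs.le; linarith
  have hcongr : ∫ x in (s * (√(1 - c) - g))..(s * (√(1 + c) - g)),
      ((fun x => rexp (-(M * (x + 1 - 2 * g * √x)))) ∘ fun t => (g + t / s) ^ 2) x *
        (2 * (g + x / s) / s) =
      ∫ x in (s * (√(1 - c) - g))..(s * (√(1 + c) - g)),
        (rexp (-(M * (1 - g ^ 2))) * (2 * g / s) * rexp (-1 * x ^ 2) +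
          rexp (-(M * (1 - g ^ 2))) * (2 / s ^ 2) * (x * rexp (-1 * x ^ 2))) := by
    apply intervalIntegral.integral_congr
    intro x hx
    rw [Set.uIcc_of_le hle] at hx
    have hx0 : 0 ≤ g + x / s := by
      have : √(1 - c) - g ≤ x / s := by
        rw [le_div_iff₀ hs]; linarith [hx.1]
      linarith
    simp only [Function.comp]
    rw [Real.sqrt_sq hx0]
    have : -(M * ((g + x / s) ^ 2 + 1 - 2 * g * (g + x / s))) =
        -(M * (1 - g ^ 2)) + -1 * x ^ 2 := by
      rw [← hs2]; field_simp; ring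
    rw [this, Real.exp_add]
    field_simp
  rw [hcongr, intervalIntegral.integral_add (Continuous.intervalIntegrable (by fun_prop) _ _)
    (Continuous.intervalIntegrable (by fun_prop) _ _),
    intervalIntegral.integral_const_mul, intervalIntegral.integral_const_mul, Real.exp_neg]
  have := Real.exp_pos (M * (1 - g ^ 2))
  generalize rexp (M * (1 - g ^ 2)) = E at *
  field_simp

/-- Asymptotics of the integral when `ξ = 1`: for fixed `c ∈ (0,1)`,
`J(M) = (1+o(1)) (γ_c/c) √(π/M) e^{−M(1−γ_c²)}` as `M → ∞`, i.e.
`J(M)·(c/γ_c)·√(M/π)·e^{M(1−γ_c²)} → 1`. -/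
theorem laplace_integral_asymptotics (c : ℝ) (hc : c ∈ Set.Ioo (0 : ℝ) 1) :
    Tendsto (fun M : ℝ =>
        Jint c M * (c / gammaC c) * Real.sqrt (M / Real.pi) * Real.exp (M * (1 - gammaC c ^ 2)))
      atTop (nhds 1) := by
  obtain ⟨hA, hB⟩ := gammaC_bounds c hc
  have hev := (eventually_gt_atTop (0 : ℝ)).mono (fun M hM => (Jint_subst c M hc hM).symm)
  refine Tendsto.congr' hev ?_
  have hs : Tendsto (fun M : ℝ => √M) atTop atTop := Real.tendsto_sqrt_atTop
  have hlo : Tendsto (fun M : ℝ => √M * (√(1 - c) - gammaC c)) atTop atBot :=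
    hs.atTop_mul_const_of_neg (by linarith)
  have hhi : Tendsto (fun M : ℝ => √M * (√(1 + c) - gammaC c)) atTop atTop :=
    hs.atTop_mul_const (by linarith)
  have i1 := MeasureTheory.intervalIntegral_tendsto_integral
    (integrable_exp_neg_mul_sq (b := 1) one_pos) hlo hhi
  have i2 := MeasureTheory.intervalIntegral_tendsto_integral
    (integrable_mul_exp_neg_mul_sq (b := 1) one_pos) hlo hhi
  rw [integral_gaussian, div_one] at i1
  have h := (i1.const_mul (√π)⁻¹).add
    ((hs.inv_tendsto_atTop.mul i2).const_mul ((√π)⁻¹ * (gammaC c)⁻¹))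
  have hpi : √π ≠ 0 := (Real.sqrt_pos.2 Real.pi_pos).ne'
  simpa [hpi] using h
end

section
/- Uniqueness of the optimal label permutation (Lemma A.1 / Lemma C.5 of prior work): Let k, n ≥ 1, let z₁, z₂ ∈ [k]^n, and suppose there exists a permutation τ* of [k] such that Ham(z₁, τ*∘z₂) < (1/2) min_{a∈[k]} |Γ_a(z₁)|, where Γ_a(z₁) = { i ∈ [n] : (z₁)_i = a } and Ham denotes the Hamming distance. Then τ* is the unique minimizer over permutations τ of [k] of the map τ ↦ Ham(z₁, τ∘z₂). -/
open Finset

/-- Hamming distance between two labelings of `[n]` by `[k]`. -/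
def hamDist (n k : ℕ) (z w : Fin n → Fin k) : ℕ :=
  (Finset.univ.filter fun i => z i ≠ w i).card

/-- Uniqueness of the optimal label permutation: if some permutation `τ*` satisfies
`Ham(z₁, τ*∘z₂) < (1/2) min_a |Γ_a(z₁)|`, then `τ*` is the unique minimizer of
`τ ↦ Ham(z₁, τ∘z₂)` over permutations `τ` of `[k]`. -/
theorem unique_optimal_permutation (k n : ℕ) (hk : 1 ≤ k) (hn : 1 ≤ n)
    (z₁ z₂ : Fin n → Fin k) (τstar : Equiv.Perm (Fin k))
    (h : ∀ a : Fin k,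
      2 * hamDist n k z₁ (fun i => τstar (z₂ i))
        < (Finset.univ.filter fun i => z₁ i = a).card) :
    ∀ τ : Equiv.Perm (Fin k), τ ≠ τstar →
      hamDist n k z₁ (fun i => τstar (z₂ i)) < hamDist n k z₁ (fun i => τ (z₂ i)) := by
  intro τ hτ
  obtain ⟨b, hb⟩ : ∃ b, τ b ≠ τstar b := by
    by_contra hc
    push Not at hc
    exact hτ (Equiv.ext hc)
  have h1 := h (τstar b)
  have h2 : (Finset.univ.filter fun i => z₁ i = τstar b).card
      ≤ hamDist n k z₁ (fun i => τstar (z₂ i)) + hamDist n k z₁ (fun i => τ (z₂ i)) := by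
    unfold hamDist
    refine le_trans (Finset.card_le_card ?_) (Finset.card_union_le _ _)
    intro i hi
    simp only [Finset.mem_filter, Finset.mem_univ, true_and, Finset.mem_union] at hi ⊢
    by_contra hc
    push Not at hc
    obtain ⟨h3, h4⟩ := hc
    have h5 : z₂ i = b := τstar.injective (h3.symm.trans hi)
    rw [h5] at h4
    exact hb (h4.symm.trans hi)
  omega
end

section
/- Rank bound for the expected adjacency matrix of a PABM: Let n ≥ 1 and k ≥ 1, let z : [n] → [k] be any labeling, let Λ = (λ_{ia}) be any real n×k matrix and B = (B_{ab}) any real k×k matrix. Then the n×n matrix P defined by P_{ij} = λ_{i z_j} λ_{j z_i} B_{z_i z_j} has rank at most k². -/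
/-- Rank bound for the expected adjacency matrix of a PABM: for any labeling `z : [n] → [k]`,
any popularity matrix `Λ ∈ ℝ^{n×k}` and any connectivity matrix `B ∈ ℝ^{k×k}`, the matrix
`P` with entries `P_{ij} = λ_{i z_j} λ_{j z_i} B_{z_i z_j}` has rank at most `k²`. -/
theorem pabm_rank_le (n k : ℕ) (hn : 1 ≤ n) (hk : 1 ≤ k) (z : Fin n → Fin k)
    (Λ : Fin n → Fin k → ℝ) (B : Fin k → Fin k → ℝ) :
    (Matrix.of fun i j : Fin n => Λ i (z j) * Λ j (z i) * B (z i) (z j)).rank ≤ k ^ 2 := by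
  let U : Matrix (Fin n) (Fin k × Fin k) ℝ :=
    Matrix.of fun i p => if z i = p.1 then Λ i p.2 * B p.1 p.2 else 0
  let V : Matrix (Fin k × Fin k) (Fin n) ℝ :=
    Matrix.of fun p j => if z j = p.2 then Λ j p.1 else 0
  have h : (Matrix.of fun i j : Fin n => Λ i (z j) * Λ j (z i) * B (z i) (z j)) = U * V := by
    ext i j
    simp [U, V, Matrix.mul_apply, Fintype.sum_prod_type]
    ring
  rw [h]
  refine (Matrix.rank_mul_le_left U V).trans ((Matrix.rank_le_card_width U).trans ?_)
  simp [sq]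
end

section
/- Sparse asymptotics of the Rényi exponent between Bernoulli laws: Fix t ∈ (0,1) and r > 0 with r ≠ 1. Let (a_n) and (b_n) be sequences in (0,1) with a_n → 0 and b_n / a_n → r. Then the ratio of −log( a_n^t b_n^{1−t} + (1−a_n)^t (1−b_n)^{1−t} ) to ( t a_n + (1−t) b_n − a_n^t b_n^{1−t} ) tends to 1 as n → ∞. -/
open Filter

lemma slope_seq (f : ℝ → ℝ) (f' : ℝ) (y : ℝ) (h : HasDerivAt f f' y) (x : ℕ → ℝ)
    (hx : Tendsto x atTop (nhds 0)) (hne : ∀ᶠ n in atTop, x n ≠ 0) :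
    Tendsto (fun n => (f (y + x n) - f y) / x n) atTop (nhds f') := by
  have h1 := hasDerivAt_iff_tendsto_slope_zero.1 h
  have h2 : Tendsto x atTop (nhdsWithin 0 {0}ᶜ) :=
    tendsto_nhdsWithin_iff.2 ⟨hx, hne⟩
  refine (h1.comp h2).congr fun n => ?_
  simp only [Function.comp, smul_eq_mul]
  rw [div_eq_inv_mul]

lemma pow_seq (p : ℝ) (x : ℕ → ℝ)
    (hx : Tendsto x atTop (nhds 0)) (hne : ∀ n, x n ≠ 0) :
    Tendsto (fun n => ((1 - x n) ^ p - 1) / x n) atTop (nhds (-p)) := by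
  have h : HasDerivAt (fun z : ℝ => (1 - z) ^ p) (-p) 0 := by
    have h1 : HasDerivAt (fun z : ℝ => 1 - z) (-1) 0 := (hasDerivAt_id (0 : ℝ)).const_sub 1
    have := h1.rpow_const (p := p) (Or.inl (by norm_num))
    simpa using this
  have := slope_seq _ _ 0 h x hx (Eventually.of_forall hne)
  simpa using this

/-- Sparse asymptotics of the Rényi exponent between Bernoulli laws: fix `t ∈ (0,1)` and
`r > 0`, `r ≠ 1`; if `a_n, b_n ∈ (0,1)`, `a_n → 0` and `b_n/a_n → r`, then
`−log(a_n^t b_n^{1−t} + (1−a_n)^t (1−b_n)^{1−t}) / (t a_n + (1−t) b_n − a_n^t b_n^{1−t}) → 1`. -/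
theorem renyi_exponent_sparse_asymptotics (t r : ℝ) (ht : t ∈ Set.Ioo (0 : ℝ) 1)
    (hr : 0 < r) (hr1 : r ≠ 1) (a b : ℕ → ℝ)
    (ha : ∀ n, a n ∈ Set.Ioo (0 : ℝ) 1) (hb : ∀ n, b n ∈ Set.Ioo (0 : ℝ) 1)
    (ha0 : Tendsto a atTop (nhds 0))
    (hba : Tendsto (fun n => b n / a n) atTop (nhds r)) :
    Tendsto (fun n =>
        (-Real.log (a n ^ t * b n ^ (1 - t) + (1 - a n) ^ t * (1 - b n) ^ (1 - t)))
          / (t * a n + (1 - t) * b n - a n ^ t * b n ^ (1 - t)))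
      atTop (nhds 1) := by
  obtain ⟨ht0, ht1⟩ := ht
  have hane : ∀ n, a n ≠ 0 := fun n => (ha n).1.ne'
  have hbne : ∀ n, b n ≠ 0 := fun n => (hb n).1.ne'
  have hb0 : Tendsto b atTop (nhds 0) := by
    have := hba.mul ha0
    rw [mul_zero] at this
    exact this.congr fun n => div_mul_cancel₀ _ (hane n)
  have hM : Tendsto (fun n => (a n ^ t * b n ^ (1 - t)) / a n) atTop (nhds (r ^ (1 - t))) := by
    refine (hba.rpow_const (p := 1 - t) (Or.inl hr.ne')).congr fun n => ?_
    have h1 : a n ^ t * a n ^ (1 - t) = a n := by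
      rw [← Real.rpow_add (ha n).1]; simp
    have h2 : a n ^ (1 - t) ≠ 0 := (Real.rpow_pos_of_pos (ha n).1 _).ne'
    rw [Real.div_rpow (hb n).1.le (ha n).1.le, div_eq_div_iff h2 (hane n)]
    linear_combination (-(b n ^ (1 - t))) * h1
  have hc : r ^ (1 - t) - t - (1 - t) * r < 0 := by
    have := rpow_one_add_lt_one_add_mul_self (s := r - 1) (p := 1 - t) (by linarith)
      (sub_ne_zero.2 hr1) (by linarith) (by linarith)
    rw [add_sub_cancel] at this
    linarith
  have hD : Tendsto (fun n => (t * a n + (1 - t) * b n - a n ^ t * b n ^ (1 - t)) / a n) atTop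
      (nhds (t + (1 - t) * r - r ^ (1 - t))) := by
    refine ((tendsto_const_nhds.add (hba.const_mul (1 - t))).sub hM).congr fun n => ?_
    have := hane n
    field_simp
  have hV : Tendsto (fun n => (1 - b n) ^ (1 - t)) atTop (nhds 1) := by
    have := ((tendsto_const_nhds (x := (1 : ℝ))).sub hb0).rpow_const (p := 1 - t)
      (Or.inl (by norm_num))
    simpa using this
  have hS : Tendsto (fun n => (a n ^ t * b n ^ (1 - t) + (1 - a n) ^ t * (1 - b n) ^ (1 - t) - 1)
      / a n) atTop (nhds (r ^ (1 - t) - t - (1 - t) * r)) := by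
    have h := (hM.add ((pow_seq t a ha0 hane).mul hV)).add ((pow_seq (1 - t) b hb0 hbne).mul hba)
    have e : r ^ (1 - t) + -t * 1 + -(1 - t) * r = r ^ (1 - t) - t - (1 - t) * r := by ring
    rw [e] at h
    refine h.congr fun n => ?_
    have h1 := hane n
    have h2 := hbne n
    field_simp
    ring
  set S : ℕ → ℝ := fun n => a n ^ t * b n ^ (1 - t) + (1 - a n) ^ t * (1 - b n) ^ (1 - t) with hSd
  have hne : ∀ᶠ n in atTop, S n - 1 ≠ 0 := by
    filter_upwards [hS.eventually_ne hc.ne] with n hn h0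
    exact hn (by simp only [hSd] at h0; rw [h0, zero_div])
  have hS0 : Tendsto (fun n => S n - 1) atTop (nhds 0) := by
    have := hS.mul ha0
    rw [mul_zero] at this
    exact this.congr fun n => div_mul_cancel₀ _ (hane n)
  have hL := slope_seq Real.log 1 1 (by simpa using Real.hasDerivAt_log one_ne_zero) _ hS0 hne
  have hfin := ((hL.mul hS).neg).div hD (by linarith)
  have e : -(1 * (r ^ (1 - t) - t - (1 - t) * r)) / (t + (1 - t) * r - r ^ (1 - t)) = 1 := by
    rw [div_eq_one_iff_eq (by linarith)]; ring
  rw [e] at hfin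
  refine hfin.congr' ?_
  filter_upwards [hne] with n hn
  have h1 := hane n
  change -((Real.log (1 + (S n - 1)) - Real.log 1) / (S n - 1) * ((S n - 1) / a n)) / (_ / a n)
    = -Real.log (S n) / _
  rw [add_sub_cancel, Real.log_one, sub_zero, div_mul_div_cancel₀ hn, ← neg_div,
    div_div_div_cancel_right₀ h1]
end
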